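/- Let n ≥ m ≥ r ≥ 1 be integers. There exists a constant c = c(m, n, r) > 0 such that for all real H ≥ 1 the number of m×n matrices with all entries in E(H) and of rank exactly r is at least c·H^{nr}. -/

import Mathlib

/-- The set of Egyptian (unit) fractions `1/a` with `a` a nonzero integer, `|a| ≤ H`. -/
def Egyptian (H : ℝ) : Set ℚ := {x : ℚ | ∃ a : ℤ, a ≠ 0 ∧ (|a| : ℝ) ≤ H ∧ x = 1 / (a : ℚ)}

open Matrix in
theorem sgn_det_ne (r : ℕ) :
    (Matrix.of fun i j : Fin r => if j < i then (-1 : ZMod 3) else 1).det ≠ 0 := by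
  have two_ne : (2 : ZMod 3) ≠ 0 := by decide
  have : Fact (Nat.Prime 3) := ⟨by norm_num⟩
  intro h
  obtain ⟨v, hv, hE⟩ := Matrix.exists_mulVec_eq_zero_iff.mpr h
  apply hv
  rcases r with _ | s
  · exact Subsingleton.elim _ _
  have hrow : ∀ i : Fin (s+1), ∑ j, (if j < i then (-1 : ZMod 3) else 1) * v j = 0 := by
    intro i
    have := congrFun hE i
    simpa only [Matrix.mulVec, dotProduct, Matrix.of_apply, Pi.zero_apply] using this
  have h1 : ∀ i : Fin s, v i.castSucc = 0 := by
    intro i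
    have hs : ∑ j, ((if j < i.castSucc then (-1 : ZMod 3) else 1) * v j
        - (if j < i.succ then (-1 : ZMod 3) else 1) * v j) = 0 := by
      rw [Finset.sum_sub_distrib, hrow, hrow, sub_zero]
    rw [Finset.sum_eq_single i.castSucc] at hs
    · simp only [lt_irrefl, if_false, Fin.castSucc_lt_succ, if_true] at hs
      have h2 : (2 : ZMod 3) * v i.castSucc = 0 := by linear_combination hs
      exact (mul_eq_zero.mp h2).resolve_left two_ne
    · intro j _ hj
      have : (j < i.castSucc) ↔ (j < i.succ) := by
        have : (j : ℕ) ≠ i := fun h => hj (Fin.ext h)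
        simp only [Fin.lt_def, Fin.val_castSucc, Fin.val_succ]
        omega
      simp [this]
    · simp
  have h2 := hrow 0
  simp only [Fin.not_lt_zero, if_false, one_mul] at h2
  rw [Fin.sum_univ_castSucc] at h2
  simp only [h1, Finset.sum_const_zero, zero_add] at h2
  funext j
  refine Fin.lastCases h2 (fun i => h1 i) j

theorem unit_det_ne (r : ℕ) (k : Fin r → Fin r → ℕ) :
    (Matrix.of fun i j : Fin r =>
      (1 : ℚ) / (((if j < i then (-1 : ℤ) else 1) * (3 * (k i j : ℤ) + 1) : ℤ) : ℚ)).det ≠ 0 := by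
  set Q : Fin r × Fin r → ℤ := fun p => 3 * (k p.1 p.2 : ℤ) + 1 with hQ
  have hQ0 : ∀ p, Q p ≠ 0 := fun p => by simp only [hQ]; omega
  set P : ℤ := ∏ p, Q p with hP
  let B : Matrix (Fin r) (Fin r) ℤ := Matrix.of fun i j =>
    (if j < i then (-1 : ℤ) else 1) * ∏ p ∈ Finset.univ.erase (i, j), Q p
  have hB : B.map (Int.castRingHom (ZMod 3)) =
      (Matrix.of fun i j : Fin r => if j < i then (-1 : ZMod 3) else 1) := by
    ext i j
    have h3 : (3 : ZMod 3) = 0 := by decide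
    simp [B, hQ, h3]
  have hBdet : B.det ≠ 0 := by
    intro h
    apply sgn_det_ne r
    rw [← hB]
    have := (Int.castRingHom (ZMod 3)).map_det B
    rw [h, map_zero] at this
    exact this.symm
  have hBQ : B.map (Int.castRingHom ℚ) = (P : ℚ) • (Matrix.of fun i j : Fin r =>
      (1 : ℚ) / (((if j < i then (-1 : ℤ) else 1) * (3 * (k i j : ℤ) + 1) : ℤ) : ℚ)) := by
    ext i j
    have hp : P = Q (i, j) * ∏ p ∈ Finset.univ.erase (i, j), Q p :=
      (Finset.mul_prod_erase _ _ (Finset.mem_univ _)).symm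
    have hq : ((Q (i, j) : ℤ) : ℚ) ≠ 0 := by exact_mod_cast hQ0 (i, j)
    have hqe : (3 * (k i j : ℤ) + 1 : ℤ) = Q (i, j) := rfl
    simp only [Matrix.map_apply, Matrix.smul_apply, Matrix.of_apply, B, hqe, hp, smul_eq_mul,
      Int.coe_castRingHom]
    generalize (∏ p ∈ Finset.univ.erase (i, j), Q p) = T
    split_ifs <;> push_cast <;> field_simp
  intro h
  apply hBdet
  have h2 := (Int.castRingHom ℚ).map_det B
  have h3 : ((Int.castRingHom ℚ).mapMatrix B) = B.map (Int.castRingHom ℚ) := rfl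
  rw [h3, hBQ, Matrix.det_smul, h, mul_zero] at h2
  simpa using h2

theorem egyptian_finite (H : ℝ) : (Egyptian H).Finite := by
  apply ((Set.finite_Icc (-⌊H⌋) ⌊H⌋).image (fun a : ℤ => 1 / (a : ℚ))).subset
  rintro x ⟨a, _, ha, rfl⟩
  refine ⟨a, ?_, rfl⟩
  have : |a| ≤ ⌊H⌋ := Int.le_floor.mpr (by push_cast; exact ha)
  exact abs_le.mp this

theorem stmt11 (m n r : ℕ) (hnm : n ≥ m) (hmr : m ≥ r) (hr : r ≥ 1) :
    ∃ c : ℝ, c > 0 ∧ ∀ H : ℝ, H ≥ 1 →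
      c * H ^ ((n * r : ℕ) : ℝ) ≤
        (Set.ncard {A : Matrix (Fin m) (Fin n) ℚ |
            (∀ i j, A i j ∈ Egyptian H) ∧ A.rank = r} : ℝ) := by
  refine ⟨(1 / 4 : ℝ) ^ (n * r), by positivity, fun H hH => ?_⟩
  rw [Real.rpow_natCast, ← mul_pow]
  set S := {A : Matrix (Fin m) (Fin n) ℚ | (∀ i j, A i j ∈ Egyptian H) ∧ A.rank = r} with hS
  have hfin : S.Finite := by
    have : (Set.univ.pi fun _ : Fin m => Set.univ.pi fun _ : Fin n => Egyptian H).Finite :=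
      Set.Finite.pi' (fun _ => Set.Finite.pi' fun _ => egyptian_finite H) |>.subset
        (by intro f hf i j; exact hf i trivial j trivial)
    refine this.subset ?_
    rintro A ⟨hA, -⟩ i - j -
    exact hA i j
  set N : ℕ := ⌊(H - 1) / 3⌋₊ + 1 with hN
  have hNH : 1 / 4 * H ≤ (N : ℝ) := by
    have h1 := Nat.lt_floor_add_one ((H - 1) / 3)
    have h0 : (0 : ℝ) ≤ (⌊(H - 1) / 3⌋₊ : ℝ) := Nat.cast_nonneg _
    rw [hN]; push_cast
    rcases le_total H 4 with h | h <;> linarith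
  have hk : ∀ k : Fin N, 3 * ((k : ℕ) : ℝ) + 1 ≤ H := by
    intro k
    have h1 : (k : ℕ) ≤ ⌊(H - 1) / 3⌋₊ := by have := k.2; omega
    have h2 := Nat.floor_le (show 0 ≤ (H - 1) / 3 by linarith)
    have h3 : ((k : ℕ) : ℝ) ≤ (⌊(H - 1) / 3⌋₊ : ℝ) := by exact_mod_cast h1
    linarith
  let sg : ℕ → ℕ → ℤ := fun i j => if j < i then -1 else 1
  let C : (Fin r × Fin n → Fin N) → Matrix (Fin r) (Fin n) ℚ := fun k => Matrix.of fun i j =>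
    1 / ((sg i j * (3 * ((k (i, j) : ℕ) : ℤ) + 1) : ℤ) : ℚ)
  let ρ : Fin m → Fin r := fun i => if h : (i : ℕ) < r then ⟨i, h⟩ else ⟨0, hr⟩
  have hρ : ∀ i : Fin r, ρ (Fin.castLE hmr i) = i := by
    intro i
    simp [ρ]
  let F : (Fin r × Fin n → Fin N) → Matrix (Fin m) (Fin n) ℚ := fun k => (C k).submatrix ρ id
  have hFinj : Function.Injective F := by
    intro k k' h
    funext ⟨i, j⟩
    have h1 := congrFun (congrFun h (Fin.castLE hmr i)) j
    simp only [F, Matrix.submatrix_apply, hρ, id, C, Matrix.of_apply, one_div, inv_inj,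
      Int.cast_inj] at h1
    have h2 : sg i j ≠ 0 := by simp only [sg]; split_ifs <;> norm_num
    have h3 := mul_left_cancel₀ h2 h1
    apply Fin.ext
    omega
  have hFS : ∀ k, F k ∈ S := by
    intro k
    refine ⟨fun i j => ⟨sg (ρ i) j * (3 * ((k (ρ i, j) : ℕ) : ℤ) + 1), ?_, ?_, rfl⟩, ?_⟩
    · refine mul_ne_zero ?_ (by omega)
      simp only [sg]; split_ifs <;> norm_num
    · have h1 : |((sg (ρ i) j : ℤ) : ℝ)| = 1 := by simp only [sg]; split_ifs <;> norm_num
      push_cast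
      rw [abs_mul, h1, one_mul, abs_of_nonneg (by positivity)]
      exact hk _
    · have hli : LinearIndependent ℚ (C k).row := by
        have hrn : r ≤ n := hmr.trans hnm
        apply LinearIndependent.of_comp (LinearMap.funLeft ℚ ℚ (Fin.castLE hrn))
        have := Matrix.linearIndependent_rows_of_det_ne_zero
          (unit_det_ne r fun i j => (k (i, Fin.castLE hrn j) : ℕ))
        exact this
      have hr1 : (C k).rank = r := by
        rw [hli.rank_matrix, Fintype.card_fin]
      rw [← hr1, Matrix.rank_eq_finrank_span_row, Matrix.rank_eq_finrank_span_row]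
      have : Set.range (F k).row = Set.range (C k).row := by
        have hsurj : Function.Surjective ρ := fun i => ⟨_, hρ i⟩
        exact hsurj.range_comp (C k).row
      rw [this]
  have hcard : N ^ (n * r) ≤ S.ncard := by
    have h1 : (Set.range F).ncard = N ^ (n * r) := by
      rw [← Set.image_univ, Set.ncard_image_of_injective _ hFinj, Set.ncard_univ]
      simp [Nat.card_eq_fintype_card, mul_comm]
    rw [← h1]
    exact Set.ncard_le_ncard (Set.range_subset_iff.mpr hFS) hfin
  calc (1 / 4 * H) ^ (n * r) ≤ (N : ℝ) ^ (n * r) := by gcongr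
    _ ≤ _ := by exact_mod_cast hcard
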